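/- arXiv:2404.13510 — 2 statements merged into one kernel-verified Lean document; each statement's English description precedes it below -/
import Mathlib

section
/- Let (X, ⪯) be a countably infinite totally ordered set. There exists a chaotic bijection f : ℕ → X if and only if X has no isolated points. -/
/-! ## Chaotic maps on the naturals -/

def Ch {X : Type*} [LinearOrder X] (f : ℕ → X) : Prop :=
  ∀ a b c : ℕ, a + c = 2 * b → f a < f b → ¬ f b < f c

section forward

variable {X : Type*} [LinearOrder X]

lemma Ch.up {f : ℕ → X} (hf : Ch f) (hi : Function.Injective f) (n d : ℕ) (hd : 0 < d)
    (h : f n < f (n + d)) : f (n + 2 * d) < f (n + d) := by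
  rcases lt_trichotomy (f (n + 2 * d)) (f (n + d)) with h1 | h1 | h1
  · exact h1
  · have := hi h1; omega
  · exact absurd h1 (hf n (n + d) (n + 2 * d) (by ring) h)

lemma Ch.down {f : ℕ → X} (hf : Ch f) (hi : Function.Injective f) (n d : ℕ) (hd : 0 < d)
    (h : f (n + d) < f n) : f (n + d) < f (n + 2 * d) := by
  rcases lt_trichotomy (f (n + 2 * d)) (f (n + d)) with h1 | h1 | h1
  · exact absurd h (hf (n + 2 * d) (n + d) n (by ring) h1)
  · have := hi h1; omega
  · exact h1

/-- antiperiodicity of comparisons at distance `d`. -/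
lemma Ch.up_iter {f : ℕ → X} (hf : Ch f) (hi : Function.Injective f) (n d : ℕ) (hd : 0 < d)
    (h : f n < f (n + d)) (j : ℕ) : f (n + (2 * j) * d) < f (n + (2 * j + 1) * d) ∧
      f (n + (2 * j + 2) * d) < f (n + (2 * j + 1) * d) := by
  induction j with
  | zero =>
    have := hf.up hi n d hd h
    constructor
    · simpa using h
    · simpa using this
  | succ j ih =>
    have e1 : n + (2 * (j + 1)) * d = n + (2 * j + 1) * d + d := by ring
    have e2 : n + (2 * (j + 1) + 1) * d = n + (2 * j + 1) * d + 2 * d := by ring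
    have e3 : n + (2 * j + 2) * d = n + (2 * j + 1) * d + d := by ring
    have h1 : f (n + (2 * (j + 1)) * d) < f (n + (2 * (j + 1) + 1) * d) := by
      rw [e1, e2]
      apply hf.down hi _ d hd
      rw [← e3]; exact ih.2
    refine ⟨h1, ?_⟩
    have e4 : n + (2 * (j + 1) + 1) * d = n + (2 * (j + 1)) * d + d := by ring
    have e5 : n + (2 * (j + 1) + 2) * d = n + (2 * (j + 1)) * d + 2 * d := by ring
    rw [e4] at h1
    rw [e4, e5]
    exact hf.up hi _ d hd h1

lemma Ch.dual {f : ℕ → X} (hf : Ch f) : Ch (fun n => OrderDual.toDual (f n)) := by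
  intro a b c h h1 h2
  exact hf c b a (by omega) h2 h1

lemma Ch.sep {f : ℕ → X} (hf : Ch f) (hi : Function.Injective f) (h0 : f 0 < f 1) (t : ℕ) :
    ∀ n, (n % 2 = 0 → f n < f (n + (2 * t + 1))) ∧ (n % 2 = 1 → f (n + (2 * t + 1)) < f n) := by
  induction t using Nat.strong_induction_on with
  | _ t ih =>
  rcases Nat.eq_zero_or_pos t with rfl | ht
  · intro n
    have key := hf.up_iter hi 0 1 one_pos h0 (n / 2)
    constructor
    · intro hn
      have := key.1
      convert this using 2 <;> omega
    · intro hn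
      have := key.2
      convert this using 2 <;> omega
  · -- comparisons of even with odd at smaller distance
    have small : ∀ e o : ℕ, e % 2 = 0 → o % 2 = 1 → e < o + (2 * t + 1) → o < e + (2 * t + 1) →
        f e < f o := by
      intro e o he ho h1 h2
      rcases lt_or_ge e o with h | h
      · have := (ih ((o - e) / 2) (by omega) e).1 he
        convert this using 2; omega
      · have := (ih ((e - o) / 2) (by omega) o).2 ho
        convert this using 2; omega
    intro n
    constructor
    · intro hn
      by_contra hlt
      have hgt : f (n + (2 * t + 1)) < f n := by
        rcases lt_trichotomy (f n) (f (n + (2 * t + 1))) with h | h | h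
        · exact absurd h hlt
        · have := hi h; omega
        · exact h
      have h2 := hf.down hi n (2 * t + 1) (by omega) hgt
      have a1 : f (n + 2) < f n :=
        (small (n + 2) (n + (2 * t + 1)) (by omega) (by omega) (by omega) (by omega)).trans hgt
      have a2 : f (n + 4 * t) < f (n + 2 * (2 * t + 1)) :=
        (small (n + 4 * t) (n + (2 * t + 1)) (by omega) (by omega) (by omega) (by omega)).trans h2
      have a3 := (hf.dual.up_iter (OrderDual.toDual.injective.comp hi) n 2 (by omega) a1 t).1
      have a4 : f (n + (2 * t + 1) * 2) < f (n + (2 * t) * 2) := a3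
      have e1 : n + (2 * t + 1) * 2 = n + 2 * (2 * t + 1) := by ring
      have e2 : n + (2 * t) * 2 = n + 4 * t := by ring
      rw [e1, e2] at a4
      exact lt_asymm a2 a4
    · intro hn
      by_contra hlt
      have hgt : f n < f (n + (2 * t + 1)) := by
        rcases lt_trichotomy (f n) (f (n + (2 * t + 1))) with h | h | h
        · exact h
        · have := hi h; omega
        · exact absurd h hlt
      have h2 := hf.up hi n (2 * t + 1) (by omega) hgt
      have a1 : f n < f (n + 2) :=
        hgt.trans (small (n + (2 * t + 1)) (n + 2) (by omega) (by omega) (by omega) (by omega))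
      have a2 : f (n + 2 * (2 * t + 1)) < f (n + 4 * t) :=
        h2.trans (small (n + (2 * t + 1)) (n + 4 * t) (by omega) (by omega) (by omega) (by omega))
      have a4 := (hf.up_iter hi n 2 (by omega) a1 t).1
      have e1 : n + (2 * t + 1) * 2 = n + 2 * (2 * t + 1) := by ring
      have e2 : n + (2 * t) * 2 = n + 4 * t := by ring
      rw [e1, e2] at a4
      exact lt_asymm a2 a4

lemma Ch.sep' {f : ℕ → X} (hf : Ch f) (hi : Function.Injective f) (h0 : f 0 < f 1)
    (e o : ℕ) (he : e % 2 = 0) (ho : o % 2 = 1) : f e < f o := by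
  rcases lt_or_ge e o with h | h
  · have := (hf.sep hi h0 ((o - e) / 2) e).1 he
    convert this using 2; omega
  · have := (hf.sep hi h0 ((e - o) / 2) o).2 ho
    convert this using 2; omega

lemma Ch.conv2_aux {f : ℕ → X} (hf : Ch f) (hi : Function.Injective f) (h0 : f 0 < f 1)
    (i j l : ℕ) (hil : i % 2 = l % 2) (h1 : f i < f j) (h2 : f j < f l) : i % 2 = j % 2 := by
  by_contra hne
  rcases Nat.mod_two_eq_zero_or_one j with hj | hj
  · exact lt_asymm h1 (hf.sep' hi h0 j i hj (by omega))
  · exact lt_asymm h2 (hf.sep' hi h0 l j (by omega) hj)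

lemma Ch.conv2 {f : ℕ → X} (hf : Ch f) (hi : Function.Injective f)
    (i j l : ℕ) (hil : i % 2 = l % 2) (h1 : f i < f j) (h2 : f j < f l) : i % 2 = j % 2 := by
  rcases lt_trichotomy (f 0) (f 1) with h | h | h
  · exact hf.conv2_aux hi h i j l hil h1 h2
  · have := hi h; omega
  · have := hf.dual.conv2_aux (OrderDual.toDual.injective.comp hi) h l j i hil.symm h2 h1
    omega

lemma Ch.conv {f : ℕ → X} (hf : Ch f) (hi : Function.Injective f) (k : ℕ) :
    ∀ u v w : ℕ, u % 2 ^ k = w % 2 ^ k → f u < f v → f v < f w → u % 2 ^ k = v % 2 ^ k := by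
  induction k with
  | zero => intro u v w _ _ _; simp [Nat.mod_one]
  | succ k ih =>
    intro u v w huw h1 h2
    have huw' : u % 2 ^ k = w % 2 ^ k :=
      Nat.ModEq.of_dvd (pow_dvd_pow 2 (Nat.le_succ k)) huw
    have huv := ih u v w huw' h1 h2
    have hpos : 0 < 2 ^ k := by positivity
    set r := u % 2 ^ k with hr
    have hu : r + 2 ^ k * (u / 2 ^ k) = u := Nat.mod_add_div u (2 ^ k)
    have hv : r + 2 ^ k * (v / 2 ^ k) = v := by rw [huv]; exact Nat.mod_add_div v (2 ^ k)
    have hw : r + 2 ^ k * (w / 2 ^ k) = w := by rw [huw']; exact Nat.mod_add_div w (2 ^ k)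
    have hmod : ∀ z : ℕ, z % 2 ^ (k + 1) = z % 2 ^ k + 2 ^ k * (z / 2 ^ k % 2) := by
      intro z; rw [pow_succ]; exact Nat.mod_mul
    have hg : Ch (fun i => f (r + 2 ^ k * i)) := by
      intro a b c habc x1 x2
      refine hf _ _ _ ?_ x1 x2
      have : 2 ^ k * a + 2 ^ k * c = 2 ^ k * (2 * b) := by rw [← habc]; ring
      calc r + 2 ^ k * a + (r + 2 ^ k * c) = 2 * r + (2 ^ k * a + 2 ^ k * c) := by ring
        _ = 2 * (r + 2 ^ k * b) := by rw [this]; ring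
    have hgi : Function.Injective (fun i => f (r + 2 ^ k * i)) := by
      intro a b hab
      have := hi hab
      exact Nat.eq_of_mul_eq_mul_left hpos (by omega)
    have hpar : u / 2 ^ k % 2 = w / 2 ^ k % 2 := by
      rw [hmod u, hmod w, ← huw'] at huw
      exact Nat.eq_of_mul_eq_mul_left hpos (by omega)
    have := hg.conv2 hgi (u / 2 ^ k) (v / 2 ^ k) (w / 2 ^ k) hpar
      (by simpa only [hu, hv] using h1) (by simpa only [hv, hw] using h2)
    rw [hmod u, hmod v, ← huv, this]

lemma forward [TopologicalSpace X] [OrderTopology X] {f : ℕ → X} (hf : Ch f)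
    (hb : Function.Bijective f) (x : X) : ¬ IsOpen ({x} : Set X) := by
  intro ho
  have hx : ({x} : Set X) ∈ nhds x := ho.mem_nhds rfl
  obtain ⟨b, rfl⟩ := hb.2 x
  have hl : ∃ K : ℕ, ∀ k ≥ K, ∀ m, m % 2 ^ k = b % 2 ^ k → ¬ f m < f b := by
    by_cases hex : ∃ l, l < f b
    · obtain ⟨l, hl, hsub⟩ := exists_Ioc_subset_of_mem_nhds hx hex
      obtain ⟨a, rfl⟩ := hb.2 l
      refine ⟨a + b, fun k hk m hm hlt => ?_⟩
      have ha : a < 2 ^ k := lt_of_le_of_lt (by omega) Nat.lt_two_pow_self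
      have hb' : b < 2 ^ k := lt_of_le_of_lt (by omega) Nat.lt_two_pow_self
      have hab : a ≠ b := fun h => by rw [h] at hl; exact lt_irrefl _ hl
      rcases lt_trichotomy (f m) (f a) with h | h | h
      · have := hf.conv hb.1 k m a b hm h hl
        rw [hm, Nat.mod_eq_of_lt ha, Nat.mod_eq_of_lt hb'] at this
        exact hab this.symm
      · have := hb.1 h
        subst this
        rw [Nat.mod_eq_of_lt ha, Nat.mod_eq_of_lt hb'] at hm
        exact hab hm
      · exact hlt.ne (hsub ⟨h, hlt.le⟩)
    · exact ⟨0, fun k _ m _ h => hex ⟨_, h⟩⟩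
  have hu : ∃ K : ℕ, ∀ k ≥ K, ∀ m, m % 2 ^ k = b % 2 ^ k → ¬ f b < f m := by
    by_cases hex : ∃ l, f b < l
    · obtain ⟨l, hl, hsub⟩ := exists_Ico_subset_of_mem_nhds hx hex
      obtain ⟨a, rfl⟩ := hb.2 l
      refine ⟨a + b, fun k hk m hm hlt => ?_⟩
      have ha : a < 2 ^ k := lt_of_le_of_lt (by omega) Nat.lt_two_pow_self
      have hb' : b < 2 ^ k := lt_of_le_of_lt (by omega) Nat.lt_two_pow_self
      have hab : a ≠ b := fun h => by rw [h] at hl; exact lt_irrefl _ hl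
      rcases lt_trichotomy (f m) (f a) with h | h | h
      · exact hlt.ne' (hsub ⟨hlt.le, h⟩)
      · have := hb.1 h
        subst this
        rw [Nat.mod_eq_of_lt ha, Nat.mod_eq_of_lt hb'] at hm
        exact hab hm
      · have := hf.conv hb.1 k b a m hm.symm hl h
        rw [Nat.mod_eq_of_lt ha, Nat.mod_eq_of_lt hb'] at this
        exact hab this.symm
    · exact ⟨0, fun k _ m _ h => hex ⟨_, h⟩⟩
  obtain ⟨K, hK⟩ := hl
  obtain ⟨K', hK'⟩ := hu
  have h1 := hK (K + K') (by omega) (b + 2 ^ (K + K')) (by simp)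
  have h2 := hK' (K + K') (by omega) (b + 2 ^ (K + K')) (by simp)
  have h3 := hb.1 (le_antisymm (not_lt.1 h1) (not_lt.1 h2))
  have : 0 < 2 ^ (K + K') := by positivity
  omega

end forward

/-! ## Construction -/

section backward

variable {X : Type*} [LinearOrder X]

def LLim (C : Set X) (p : X) : Prop :=
  (∃ q ∈ C, q < p) ∧ ∀ q ∈ C, q < p → ∃ r ∈ C, q < r ∧ r < p

def RLim (C : Set X) (p : X) : Prop :=
  (∃ q ∈ C, p < q) ∧ ∀ q ∈ C, p < q → ∃ r ∈ C, p < r ∧ r < q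

def NI (C : Set X) : Prop := ∀ p ∈ C, LLim C p ∨ RLim C p

lemma NI.cutR {C : Set X} (h : NI C) {t : X} (ht : t ∈ C) (hr : RLim C t) :
    NI {z | z ∈ C ∧ z < t} ∧ NI {z | z ∈ C ∧ t ≤ z} := by
  constructor
  · rintro p ⟨hp, hpt⟩
    rcases h p hp with ⟨⟨q, hq, hqp⟩, h2⟩ | ⟨_, h2⟩
    · left
      refine ⟨⟨q, ⟨hq, hqp.trans hpt⟩, hqp⟩, ?_⟩
      rintro q ⟨hq, _⟩ hqp
      obtain ⟨r, hr, h3, h4⟩ := h2 q hq hqp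
      exact ⟨r, ⟨hr, h4.trans hpt⟩, h3, h4⟩
    · right
      obtain ⟨r, hr, h3, h4⟩ := h2 t ht hpt
      refine ⟨⟨r, ⟨hr, h4⟩, h3⟩, ?_⟩
      rintro q ⟨hq, hqt⟩ hqp
      obtain ⟨r, hr, h3, h4⟩ := h2 q hq hqp
      exact ⟨r, ⟨hr, h4.trans hqt⟩, h3, h4⟩
  · rintro p ⟨hp, hpt⟩
    have key : RLim C p → RLim {z | z ∈ C ∧ t ≤ z} p := by
      rintro ⟨⟨q, hq, hqp⟩, h2⟩
      refine ⟨⟨q, ⟨hq, hpt.trans hqp.le⟩, hqp⟩, ?_⟩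
      rintro q ⟨hq, _⟩ hqp
      obtain ⟨r, hr, h3, h4⟩ := h2 q hq hqp
      exact ⟨r, ⟨hr, hpt.trans h3.le⟩, h3, h4⟩
    rcases hpt.eq_or_lt with rfl | hlt
    · exact Or.inr (key hr)
    rcases h p hp with ⟨_, h2⟩ | h1
    · left
      refine ⟨⟨t, ⟨ht, le_rfl⟩, hlt⟩, ?_⟩
      rintro q ⟨hq, htq⟩ hqp
      obtain ⟨r, hr, h3, h4⟩ := h2 q hq hqp
      exact ⟨r, ⟨hr, htq.trans h3.le⟩, h3, h4⟩
    · exact Or.inr (key h1)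

lemma NI.cutL {C : Set X} (h : NI C) {t : X} (ht : t ∈ C) (hr : LLim C t) :
    NI {z | z ∈ C ∧ z ≤ t} ∧ NI {z | z ∈ C ∧ t < z} := by
  have h' : @NI Xᵒᵈ _ C := by
    intro p hp
    rcases h p hp with ⟨h1, h2⟩ | ⟨h1, h2⟩
    · right
      refine ⟨h1, fun q hq hqp => ?_⟩
      obtain ⟨r, hr, h3, h4⟩ := h2 q hq hqp
      exact ⟨r, hr, h4, h3⟩
    · left
      refine ⟨h1, fun q hq hqp => ?_⟩
      obtain ⟨r, hr, h3, h4⟩ := h2 q hq hqp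
      exact ⟨r, hr, h4, h3⟩
  have back : ∀ D : Set X, @NI Xᵒᵈ _ D → NI D := by
    intro D h p hp
    rcases h p hp with ⟨h1, h2⟩ | ⟨h1, h2⟩
    · right
      refine ⟨h1, fun q hq hqp => ?_⟩
      obtain ⟨r, hr, h3, h4⟩ := h2 q hq hqp
      exact ⟨r, hr, h4, h3⟩
    · left
      refine ⟨h1, fun q hq hqp => ?_⟩
      obtain ⟨r, hr, h3, h4⟩ := h2 q hq hqp
      exact ⟨r, hr, h4, h3⟩
  have hr' : @RLim Xᵒᵈ _ C t := by
    obtain ⟨h1, h2⟩ := hr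
    refine ⟨h1, fun q hq hqp => ?_⟩
    obtain ⟨r, hr, h3, h4⟩ := h2 q hq hqp
    exact ⟨r, hr, h4, h3⟩
  have := @NI.cutR Xᵒᵈ _ C h' t ht hr'
  exact ⟨back _ this.2, back _ this.1⟩

lemma NI.split_lt {C : Set X} (h : NI C) {x y : X} (hx : x ∈ C) (hy : y ∈ C) (hxy : x < y) :
    ∃ A B : Set X, A ∪ B = C ∧ x ∈ A ∧ y ∈ B ∧ NI A ∧ NI B ∧ ∀ a ∈ A, ∀ b ∈ B, a < b := by
  have h1 : ∀ t ∈ C, x < t → t ≤ y → RLim C t → ∃ A B : Set X, A ∪ B = C ∧ x ∈ A ∧ y ∈ B ∧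
      NI A ∧ NI B ∧ ∀ a ∈ A, ∀ b ∈ B, a < b := by
    intro t ht hxt hty hr
    obtain ⟨n1, n2⟩ := h.cutR ht hr
    refine ⟨{z | z ∈ C ∧ z < t}, {z | z ∈ C ∧ t ≤ z}, ?_, ⟨hx, hxt⟩, ⟨hy, hty⟩, n1, n2,
      fun a ha b hb => ha.2.trans_le hb.2⟩
    ext z
    simp only [Set.mem_union, Set.mem_ofPred_eq, ← and_or_left, and_iff_left_iff_imp]
    intro _; exact lt_or_ge z t
  have h2 : ∀ t ∈ C, x ≤ t → t < y → LLim C t → ∃ A B : Set X, A ∪ B = C ∧ x ∈ A ∧ y ∈ B ∧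
      NI A ∧ NI B ∧ ∀ a ∈ A, ∀ b ∈ B, a < b := by
    intro t ht hxt hty hr
    obtain ⟨n1, n2⟩ := h.cutL ht hr
    refine ⟨{z | z ∈ C ∧ z ≤ t}, {z | z ∈ C ∧ t < z}, ?_, ⟨hx, hxt⟩, ⟨hy, hty⟩, n1, n2,
      fun a ha b hb => ha.2.trans_lt hb.2⟩
    ext z
    simp only [Set.mem_union, Set.mem_ofPred_eq, ← and_or_left, and_iff_left_iff_imp]
    intro _; exact le_or_gt z t
  rcases h x hx with hl | hr
  · exact h2 x hx le_rfl hxy hl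
  · obtain ⟨t, ht, hxt, hty⟩ := hr.2 y hy hxy
    rcases h t ht with hl | hr
    · exact h2 t ht hxt.le hty hl
    · exact h1 t ht hxt hty.le hr

def Sepd (A B : Set X) : Prop := (∀ a ∈ A, ∀ b ∈ B, a < b) ∨ (∀ a ∈ A, ∀ b ∈ B, b < a)

lemma NI.split {C : Set X} (h : NI C) {x y : X} (hx : x ∈ C) (hy : y ∈ C) (hxy : x ≠ y) :
    ∃ A B : Set X, A ∪ B = C ∧ x ∈ A ∧ y ∈ B ∧ NI A ∧ NI B ∧ Sepd A B := by
  rcases lt_or_gt_of_ne hxy with hlt | hlt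
  · obtain ⟨A, B, h1, h2, h3, h4, h5, h6⟩ := h.split_lt hx hy hlt
    exact ⟨A, B, h1, h2, h3, h4, h5, Or.inl h6⟩
  · obtain ⟨A, B, h1, h2, h3, h4, h5, h6⟩ := h.split_lt hy hx hlt
    exact ⟨B, A, by rw [Set.union_comm]; exact h1, h3, h2, h5, h4,
      Or.inr fun a ha b hb => h6 b hb a ha⟩

def Fst (e : X → ℕ) (C : Set X) (x : X) : Prop := x ∈ C ∧ ∀ z ∈ C, e x ≤ e z

lemma Fst.exists (e : X → ℕ) {C : Set X} (h : C.Nonempty) : ∃ x, Fst e C x := by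
  obtain ⟨x, hx, hm⟩ := (measure e).wf.has_min C h
  exact ⟨x, hx, fun z hz => not_lt.1 (hm z hz)⟩

lemma Fst.unique {e : X → ℕ} (he : Function.Injective e) {C : Set X} {x y : X}
    (hx : Fst e C x) (hy : Fst e C y) : x = y :=
  he (le_antisymm (hx.2 y hy.1) (hy.2 x hx.1))

/-- One splitting step. -/
lemma NI.step (e : X → ℕ) {C : Set X} (h : NI C) (hC : C.Nonempty) :
    ∃ A B : Set X, A ∪ B = C ∧ NI A ∧ NI B ∧ Sepd A B ∧
      ∃ x y, Fst e C x ∧ x ∈ A ∧ y ∈ B ∧ ∀ z ∈ C, z ≠ x → e y ≤ e z := by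
  obtain ⟨x, hx⟩ := Fst.exists e hC
  have hne : (C \ {x}).Nonempty := by
    rcases h x hx.1 with ⟨⟨q, hq, hl⟩, _⟩ | ⟨⟨q, hq, hl⟩, _⟩
    · exact ⟨q, hq, hl.ne⟩
    · exact ⟨q, hq, hl.ne'⟩
  obtain ⟨y, hy, hmin⟩ := Fst.exists e hne
  obtain ⟨A, B, h1, h2, h3, h4, h5, h6⟩ := h.split hx.1 hy.1 (Ne.symm hy.2)
  exact ⟨A, B, h1, h4, h5, h6, x, y, hx, h2, h3, fun z hz hzx => hmin z ⟨hz, hzx⟩⟩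

lemma modEq_succ_iff (a b k : ℕ) : a % 2 ^ (k + 1) = b % 2 ^ (k + 1) ↔
    a % 2 ^ k = b % 2 ^ k ∧ a.testBit k = b.testBit k := by
  constructor
  · intro h
    refine ⟨Nat.ModEq.of_dvd (pow_dvd_pow 2 (Nat.le_succ k)) h, ?_⟩
    have := congrArg (fun z => z.testBit k) h
    simpa [Nat.testBit_mod_two_pow] using this
  · rintro ⟨h1, h2⟩
    apply Nat.eq_of_testBit_eq
    intro i
    have := congrArg (fun z => z.testBit i) h1
    simp only [Nat.testBit_mod_two_pow] at this ⊢
    rcases lt_trichotomy i k with h | h | h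
    · simpa [h, Nat.lt_succ_of_lt h] using this
    · subst h; simp [h2]
    · have : ¬ i < k + 1 := by omega
      simp [this]

lemma exists_bit {a b : ℕ} (h : a ≠ b) : ∃ k, a % 2 ^ k = b % 2 ^ k ∧ a.testBit k ≠ b.testBit k := by
  classical
  by_contra hcon
  push Not at hcon
  have : ∀ k, a % 2 ^ k = b % 2 ^ k := by
    intro k
    induction k with
    | zero => simp [Nat.mod_one]
    | succ k ih => exact (modEq_succ_iff a b k).2 ⟨ih, hcon k ih⟩
  have h1 := this (a + b)
  rw [Nat.mod_eq_of_lt (lt_of_le_of_lt (by omega) Nat.lt_two_pow_self),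
    Nat.mod_eq_of_lt (lt_of_le_of_lt (by omega) Nat.lt_two_pow_self)] at h1
  exact h h1

lemma backward [Countable X] [Nonempty X] (hX : NI (Set.univ : Set X)) :
    ∃ f : ℕ → X, Function.Bijective f ∧ Ch f := by
  classical
  obtain ⟨e, he⟩ := exists_injective_nat X
  let Piece := {C : Set X // NI C ∧ C.Nonempty}
  have hstep : ∀ C : Piece, ∃ A B : Piece, A.1 ∪ B.1 = C.1 ∧ Sepd A.1 B.1 ∧
      ∃ x y, Fst e C.1 x ∧ x ∈ A.1 ∧ y ∈ B.1 ∧ ∀ z ∈ C.1, z ≠ x → e y ≤ e z := by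
    rintro ⟨C, hC, hne⟩
    obtain ⟨A, B, h1, h2, h3, h4, x, y, hx, hxA, hyB, hmin⟩ := hC.step e hne
    exact ⟨⟨A, h2, x, hxA⟩, ⟨B, h3, y, hyB⟩, h1, h4, x, y, hx, hxA, hyB, hmin⟩
  choose A B hAB hsep fst snd hfst hfA hsB hmin using hstep
  have fst_eq : ∀ C : Piece, ∀ x, Fst e C.1 x → fst C = x := fun C x hx => (hfst C).unique he hx
  have hAsub : ∀ C, (A C).1 ⊆ C.1 := fun C => by
    rw [← hAB C]; exact Set.subset_union_left
  have hBsub : ∀ C, (B C).1 ⊆ C.1 := fun C => by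
    rw [← hAB C]; exact Set.subset_union_right
  have hdisj : ∀ C z, z ∈ (A C).1 → z ∉ (B C).1 := by
    intro C z h1 h2
    rcases hsep C with h | h
    · exact lt_irrefl _ (h z h1 z h2)
    · exact lt_irrefl _ (h z h1 z h2)
  have fstA : ∀ C, fst (A C) = fst C := fun C =>
    fst_eq _ _ ⟨hfA C, fun z hz => (hfst C).2 z (hAsub C hz)⟩
  obtain ⟨P, hP0, hPs⟩ : ∃ P : ℕ → ℕ → Piece, (∀ n, P 0 n = ⟨Set.univ, hX, Set.univ_nonempty⟩) ∧
      ∀ k n, P (k + 1) n = if n.testBit k then B (P k n) else A (P k n) :=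
    ⟨fun k n => Nat.rec (⟨Set.univ, hX, Set.univ_nonempty⟩ : Piece)
      (fun k C => if n.testBit k then B C else A C) k, fun _ => rfl, fun _ _ => rfl⟩
  have hPmod : ∀ k n m, n % 2 ^ k = m % 2 ^ k → P k n = P k m := by
    intro k
    induction k with
    | zero => intro n m _; rw [hP0, hP0]
    | succ k ih =>
      intro n m h
      obtain ⟨h1, h2⟩ := (modEq_succ_iff n m k).1 h
      rw [hPs, hPs, ih n m h1, h2]
  have hPsub : ∀ k n, (P (k + 1) n).1 ⊆ (P k n).1 := by
    intro k n
    rw [hPs]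
    split_ifs
    · exact hBsub _
    · exact hAsub _
  have hPanti : ∀ n j k, j ≤ k → (P k n).1 ⊆ (P j n).1 := by
    intro n j k hjk
    induction k, hjk using Nat.le_induction with
    | base => exact subset_rfl
    | succ k _ ih => exact (hPsub k n).trans ih
  have hstab : ∀ n j k, n < 2 ^ j → j ≤ k → fst (P k n) = fst (P j n) := by
    intro n j k hn hjk
    induction k, hjk using Nat.le_induction with
    | base => rfl
    | succ k hjk ih =>
      have : n.testBit k = false :=
        Nat.testBit_lt_two_pow (hn.trans_le (Nat.pow_le_pow_right (by norm_num) hjk))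
      rw [hPs, this]
      simpa [fstA] using ih
  let f : ℕ → X := fun n => fst (P n n)
  have hfk : ∀ n k, n < 2 ^ k → f n = fst (P k n) := by
    intro n k hk
    have h1 := hstab n k (max n k) hk (le_max_right _ _)
    have h2 := hstab n n (max n k) Nat.lt_two_pow_self (le_max_left _ _)
    exact h2.symm.trans h1
  have hfmem : ∀ n k, f n ∈ (P k n).1 := by
    intro n k
    have h1 : n < 2 ^ (n + k) := lt_of_le_of_lt (by omega) Nat.lt_two_pow_self
    rw [hfk n (n + k) h1]
    exact hPanti n k (n + k) (by omega) (hfst _).1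
  -- membership in halves
  have hhalf : ∀ n k, (n.testBit k = true → f n ∈ (B (P k n)).1) ∧
      (n.testBit k = false → f n ∈ (A (P k n)).1) := by
    intro n k
    have := hfmem n (k + 1)
    rw [hPs] at this
    constructor
    · intro h; simpa [h] using this
    · intro h; simpa [h] using this
  refine ⟨f, ⟨?_, ?_⟩, ?_⟩
  · intro a b hab
    by_contra hne
    obtain ⟨k, h1, h2⟩ := exists_bit hne
    have hPk := hPmod k a b h1
    cases ha : a.testBit k <;> cases hb : b.testBit k
    · exact h2 (ha.trans hb.symm)
    · exact hdisj (P k b) (f a) (hPk ▸ (hhalf a k).2 ha) (hab ▸ (hhalf b k).1 hb)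
    · exact hdisj (P k b) (f b) ((hhalf b k).2 hb) (hab ▸ hPk ▸ (hhalf a k).1 ha)
    · exact h2 (ha.trans hb.symm)
  · intro y
    let S : ℕ × ℕ → Set X := fun p => {z | z ∈ (P p.1 p.2).1 ∧ e z < e y}
    have hfin : ∀ p, (S p).Finite := by
      intro p
      refine Set.Finite.subset ((Set.finite_Iio (e y)).preimage he.injOn) ?_
      intro z hz
      exact hz.2
    let G : Set (ℕ × ℕ) := {p | p.2 < 2 ^ p.1 ∧ y ∈ (P p.1 p.2).1}
    have hG : G.Nonempty := ⟨(0, 0), by simp [G, hP0]⟩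
    obtain ⟨⟨k, n⟩, ⟨hn, hy⟩, hm⟩ := (measure fun p => (S p).ncard).wf.has_min G hG
    simp only at hn hy
    refine ⟨n, ?_⟩
    rw [hfk n k hn]
    by_contra hne
    have hey : e (fst (P k n)) < e y :=
      lt_of_le_of_ne ((hfst _).2 y hy) (fun h => hne (he h))
    have hcase : y ∈ (A (P k n)).1 ∪ (B (P k n)).1 := by rw [hAB]; exact hy
    rcases hcase with hyA | hyB
    · have hnb : n.testBit k = false := Nat.testBit_lt_two_pow hn
      have hP' : P (k + 1) n = A (P k n) := by rw [hPs, hnb]; simp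
      refine hm (k + 1, n) ⟨?_, ?_⟩ ?_
      · simp only; rw [pow_succ]; omega
      · simp only; rw [hP']; exact hyA
      · refine Set.ncard_lt_ncard ?_ (hfin (k, n))
        refine (Set.ssubset_iff_of_subset ?_).2 ⟨snd (P k n), ⟨?_, ?_⟩, ?_⟩
        · rintro z ⟨hz, hz2⟩
          exact ⟨hPsub k n hz, hz2⟩
        · exact hBsub _ (hsB _)
        · refine lt_of_le_of_ne (hmin _ y hy (Ne.symm hne)) (fun h => ?_)
          have := he h
          exact hdisj _ y hyA (this ▸ hsB (P k n))
        · rintro ⟨hz, _⟩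
          simp only [hP'] at hz
          exact hdisj _ _ hz (hsB _)
    · have hnb : (n + 2 ^ k).testBit k = true := by
        rw [Nat.add_comm, Nat.testBit_two_pow_add_eq, Nat.testBit_lt_two_pow hn]; rfl
      have hPe : P k (n + 2 ^ k) = P k n := hPmod _ _ _ (by simp)
      have hP' : P (k + 1) (n + 2 ^ k) = B (P k n) := by rw [hPs, hnb, hPe]; simp
      refine hm (k + 1, n + 2 ^ k) ⟨?_, ?_⟩ ?_
      · simp only; rw [pow_succ]; omega
      · simp only; rw [hP']; exact hyB
      · refine Set.ncard_lt_ncard ?_ (hfin (k, n))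
        refine (Set.ssubset_iff_of_subset ?_).2 ⟨fst (P k n), ⟨?_, hey⟩, ?_⟩
        · rintro z ⟨hz, hz2⟩
          simp only [hP'] at hz
          exact ⟨hBsub _ hz, hz2⟩
        · exact (hfst _).1
        · rintro ⟨hz, _⟩
          simp only [hP'] at hz
          exact hdisj _ _ (hfA _) hz
  · intro a b c habc h1 h2
    have hne : a ≠ b := fun h => by rw [h] at h1; exact lt_irrefl _ h1
    obtain ⟨k, hk1, hk2⟩ := exists_bit hne
    have hac : a % 2 ^ (k + 1) = c % 2 ^ (k + 1) := by
      have hab : a ≡ b [MOD 2 ^ k] := hk1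
      have h3 : 2 * a ≡ 2 * b [MOD 2 * 2 ^ k] := hab.mul_left' 2
      have h4 : a + a ≡ a + c [MOD 2 ^ (k + 1)] := by
        rw [habc, ← two_mul, pow_succ, mul_comm (2 ^ k) 2]; exact h3
      exact Nat.ModEq.add_left_cancel' a h4
    obtain ⟨hc1, hc2⟩ := (modEq_succ_iff a c k).1 hac
    have hPab := hPmod k a b hk1
    have hPac := hPmod k a c hc1
    cases ha : a.testBit k <;> cases hb : b.testBit k
    · exact hk2 (ha.trans hb.symm)
    · have xa := (hhalf a k).2 ha
      have xb := (hhalf b k).1 hb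
      have xc := (hhalf c k).2 (hc2 ▸ ha)
      rw [← hPab] at xb
      rw [← hPac] at xc
      rcases hsep (P k a) with h | h
      · exact lt_asymm h2 (h _ xc _ xb)
      · exact lt_asymm h1 (h _ xa _ xb)
    · have xa := (hhalf a k).1 ha
      have xb := (hhalf b k).2 hb
      have xc := (hhalf c k).1 (hc2 ▸ ha)
      rw [← hPab] at xb
      rw [← hPac] at xc
      rcases hsep (P k a) with h | h
      · exact lt_asymm h1 (h _ xb _ xa)
      · exact lt_asymm h2 (h _ xb _ xc)
    · exact hk2 (ha.trans hb.symm)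

lemma NI_of_top [TopologicalSpace X] [OrderTopology X] (h : ∀ x : X, ¬ IsOpen ({x} : Set X)) :
    NI (Set.univ : Set X) := by
  intro p _
  by_contra hcon
  rw [not_or] at hcon
  obtain ⟨hl, hr⟩ := hcon
  have h1 : IsOpen (Set.Ici p) := by
    by_cases hex : ∃ q, q < p
    · have : ∃ q, q < p ∧ ∀ r, q < r → ¬ r < p := by
        by_contra hc
        push Not at hc
        obtain ⟨q, hq⟩ := hex
        refine hl ⟨⟨q, trivial, hq⟩, fun q _ hq => ?_⟩
        obtain ⟨r, h1, h2⟩ := hc q hq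
        exact ⟨r, trivial, h1, h2⟩
      obtain ⟨q, hq, hq2⟩ := this
      have : Set.Ici p = Set.Ioi q := by
        ext z
        exact ⟨fun hz => hq.trans_le hz, fun hz => not_lt.1 (hq2 z hz)⟩
      rw [this]; exact isOpen_Ioi
    · have : Set.Ici p = Set.univ := by
        ext z
        simp only [Set.mem_Ici, Set.mem_univ, iff_true]
        exact not_lt.1 fun hz => hex ⟨z, hz⟩
      rw [this]; exact isOpen_univ
  have h2 : IsOpen (Set.Iic p) := by
    by_cases hex : ∃ q, p < q
    · have : ∃ q, p < q ∧ ∀ r, p < r → ¬ r < q := by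
        by_contra hc
        push Not at hc
        obtain ⟨q, hq⟩ := hex
        refine hr ⟨⟨q, trivial, hq⟩, fun q _ hq => ?_⟩
        obtain ⟨r, h1, h2⟩ := hc q hq
        exact ⟨r, trivial, h1, h2⟩
      obtain ⟨q, hq, hq2⟩ := this
      have : Set.Iic p = Set.Iio q := by
        ext z
        exact ⟨fun hz => lt_of_le_of_lt hz hq, fun hz => not_lt.1 fun hz' => hq2 z hz' hz⟩
      rw [this]; exact isOpen_Iio
    · have : Set.Iic p = Set.univ := by
        ext z
        simp only [Set.mem_Iic, Set.mem_univ, iff_true]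
        exact not_lt.1 fun hz => hex ⟨z, hz⟩
      rw [this]; exact isOpen_univ
  apply h p
  have : ({p} : Set X) = Set.Ici p ∩ Set.Iic p := by
    ext z
    simp only [Set.mem_singleton_iff, Set.mem_inter_iff, Set.mem_Ici, Set.mem_Iic]
    exact ⟨fun h => by simp [h], fun h => le_antisymm h.2 h.1⟩
  rw [this]
  exact h1.inter h2

end backward

/-- Let (X, ⪯) be a countably infinite totally ordered set. There exists a
chaotic bijection f : ℕ → X if and only if X has no isolated points (for the order
topology). A map f is chaotic if it is injective and there are no a, b, c with
f(a) ≺ f(b) ≺ f(c) and b − a = c − b. -/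
theorem stmt_0 {X : Type*} [LinearOrder X] [TopologicalSpace X] [OrderTopology X]
    [Countable X] [Infinite X] :
    (∃ f : ℕ → X, Function.Bijective f ∧
        ¬ ∃ a b c : ℕ, f a < f b ∧ f b < f c ∧ (b : ℚ) - (a : ℚ) = (c : ℚ) - (b : ℚ)) ↔
      ∀ x : X, ¬ IsOpen ({x} : Set X) := by
  constructor
  · rintro ⟨f, hb, hf⟩
    refine forward (f := f) ?_ hb
    intro a b c habc h1 h2
    refine hf ⟨a, b, c, h1, h2, ?_⟩
    have : (a : ℚ) + c = 2 * b := by exact_mod_cast habc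
    linarith
  · intro h
    obtain ⟨f, hb, hf⟩ := backward (NI_of_top h)
    refine ⟨f, hb, ?_⟩
    rintro ⟨a, b, c, h1, h2, h3⟩
    refine hf a b c ?_ h1 h2
    have : (a : ℚ) + c = 2 * b := by linarith
    exact_mod_cast this
end

section
/- Let (X, ⪯) be a countably infinite totally ordered set. There exists a chaotic bijection f : ℚ → X if and only if X has no isolated points and either X does not have a maximum or X does not have a minimum. -/
/-- `x` lies in `2^k ℤ_(2)`. -/
def Dy (k : ℤ) (x : ℚ) : Prop := ∃ a b : ℤ, Odd b ∧ x * b = a * (2 : ℚ) ^ k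

theorem Dy.zero (k : ℤ) : Dy k 0 := ⟨0, 1, odd_one, by simp⟩

theorem Dy.neg {k : ℤ} {x : ℚ} (h : Dy k x) : Dy k (-x) := by
  obtain ⟨a, b, hb, h⟩ := h
  exact ⟨-a, b, hb, by push_cast; linear_combination -h⟩

theorem Dy.add {k : ℤ} {x y : ℚ} (h : Dy k x) (h' : Dy k y) : Dy k (x + y) := by
  obtain ⟨a, b, hb, h⟩ := h
  obtain ⟨c, d, hd, h'⟩ := h'
  exact ⟨a * d + c * b, b * d, hb.mul hd, by push_cast; linear_combination d * h + b * h'⟩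

theorem Dy.sub {k : ℤ} {x y : ℚ} (h : Dy k x) (h' : Dy k y) : Dy k (x - y) := by
  rw [sub_eq_add_neg]; exact h.add h'.neg

theorem Dy.mono {k l : ℤ} (hkl : k ≤ l) {x : ℚ} (h : Dy l x) : Dy k x := by
  obtain ⟨a, b, hb, h⟩ := h
  obtain ⟨n, rfl⟩ := Int.le.dest hkl
  refine ⟨a * 2 ^ n, b, hb, ?_⟩
  rw [h, zpow_add₀ (by norm_num)]
  push_cast
  rw [zpow_natCast]; ring

theorem Dy.two {k : ℤ} {x : ℚ} (h : Dy k x) : Dy (k + 1) (2 * x) := by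
  obtain ⟨a, b, hb, h⟩ := h
  refine ⟨a, b, hb, ?_⟩
  rw [zpow_add₀ (by norm_num)]
  simp only [zpow_one]; linear_combination 2 * h

theorem Dy.pow (k : ℤ) : Dy k ((2 : ℚ) ^ k) := ⟨1, 1, odd_one, by simp⟩

theorem Dy.not_pow (k : ℤ) : ¬ Dy (k + 1) ((2 : ℚ) ^ k) := by
  rintro ⟨a, b, hb, h⟩
  rw [zpow_add₀ (by norm_num), zpow_one] at h
  have h2 : (2 : ℚ) ^ k ≠ 0 := by positivity
  have : (b : ℚ) = 2 * a := mul_left_cancel₀ h2 (by linear_combination h)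
  have h3 : b = 2 * a := by exact_mod_cast this
  rw [h3] at hb
  exact (Int.not_odd_iff_even.2 (even_two_mul a)) hb

theorem Dy.binary {k : ℤ} {x y : ℚ} (hx : Dy k x) (hx' : ¬ Dy (k + 1) x)
    (hy : Dy k y) (hy' : ¬ Dy (k + 1) y) : Dy (k + 1) (x - y) := by
  obtain ⟨a, b, hb, h⟩ := hx
  obtain ⟨c, d, hd, h'⟩ := hy
  have key : ∀ {x : ℚ} {a b : ℤ}, Odd b → x * b = a * (2 : ℚ) ^ k → ¬ Dy (k + 1) x → Odd a := by
    intro x a b hb h hx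
    by_contra ha
    obtain ⟨r, hr⟩ := even_iff_two_dvd.1 (Int.not_odd_iff_even.1 ha)
    refine hx ⟨r, b, hb, ?_⟩
    rw [h, hr, zpow_add₀ (by norm_num)]; push_cast; ring
  have ha := key hb h hx'
  have hc := key hd h' hy'
  obtain ⟨r, hr⟩ := even_iff_two_dvd.1 ((ha.mul hd).sub_odd (hc.mul hb))
  refine ⟨r, b * d, hb.mul hd, ?_⟩
  have hr' : (a : ℚ) * d - c * b = 2 * r := by exact_mod_cast hr
  rw [zpow_add₀ (by norm_num)]; push_cast
  linear_combination d * h - b * h' + 2 ^ k * hr'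

theorem Dy.exists (x : ℚ) : ∃ j : ℕ, Dy (-(j : ℤ)) x := by
  obtain ⟨k, m, hm, h⟩ := Nat.exists_eq_two_pow_mul_odd x.den_nz
  refine ⟨k, x.num, m, by exact_mod_cast hm, ?_⟩
  have h1 : x * x.den = x.num := Rat.mul_den_eq_num x
  rw [h] at h1
  push_cast at h1 ⊢
  rw [zpow_neg, zpow_natCast]
  field_simp
  linear_combination h1

theorem Dy.eq_zero {x : ℚ} (h : ∀ m : ℕ, Dy m x) : x = 0 := by
  obtain ⟨a, b, hb, h⟩ := h (x.num.natAbs)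
  have h1 : x * x.den = x.num := Rat.mul_den_eq_num x
  have h2 : x.num * b = 2 ^ x.num.natAbs * (a * x.den) := by
    have : (x.num : ℚ) * b = 2 ^ x.num.natAbs * (a * x.den) := by
      rw [zpow_natCast] at h
      rw [← h1]; linear_combination x.den * h
    exact_mod_cast this
  have h3 : (2 : ℤ) ^ x.num.natAbs ∣ x.num := by
    refine IsCoprime.dvd_of_dvd_mul_right (z := b) ?_ ⟨_, h2⟩
    apply IsCoprime.pow_left
    obtain ⟨r, hr⟩ := hb
    exact ⟨-r, 1, by rw [hr]; ring⟩
  have h4 : x.num = 0 := by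
    apply Int.eq_zero_of_abs_lt_dvd h3
    rw [Int.abs_eq_natAbs]
    exact_mod_cast Nat.lt_two_pow_self
  exact Rat.num_eq_zero.1 h4

open Classical in
noncomputable def lab (x : ℚ) : ℕ := Nat.find (Dy.exists x)

theorem lab_spec (x : ℚ) : Dy (-(lab x : ℤ)) x := by
  classical
  exact Nat.find_spec (Dy.exists x)

theorem lab_le {x : ℚ} {j : ℕ} (h : Dy (-(j : ℤ)) x) : lab x ≤ j := by
  classical
  exact Nat.find_min' (Dy.exists x) h

theorem Dy.of_lab {x : ℚ} {j : ℕ} (h : lab x ≤ j) : Dy (-(j : ℤ)) x :=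
  (lab_spec x).mono (by omega)

theorem lab_sub {x y : ℚ} (h : lab x = lab y) : Dy (-((lab x - 1 : ℕ) : ℤ)) (x - y) := by
  rcases Nat.eq_zero_or_pos (lab x) with h0 | h0
  · have hx := lab_spec x
    have hy := lab_spec y
    rw [← h] at hy
    rw [h0] at *
    exact hx.sub hy
  · obtain ⟨i, hi⟩ : ∃ i, lab x = i + 1 := ⟨lab x - 1, by omega⟩
    have e : -((lab x - 1 : ℕ) : ℤ) = -((i + 1 : ℕ) : ℤ) + 1 := by rw [hi]; simp
    have e' : -((i + 1 : ℕ) : ℤ) + 1 = -(i : ℤ) := by simp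
    rw [e]
    refine Dy.binary (Dy.of_lab (by omega)) ?_ (Dy.of_lab (by omega)) ?_
    · rw [e']; intro hh; have := lab_le hh; omega
    · rw [e']; intro hh; have := lab_le hh; omega

theorem lab_eq {x y : ℚ} (h : Dy (-((lab x - 1 : ℕ) : ℤ)) (x - y)) : lab x = lab y := by
  have hy : y = x - (x - y) := by ring
  have hle : lab y ≤ lab x := by
    apply lab_le
    rw [hy]
    exact (lab_spec x).sub (h.mono (by omega))
  by_contra hne
  have hlt : lab y ≤ lab x - 1 := by omega
  have : Dy (-((lab x - 1 : ℕ) : ℤ)) x := by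
    have hx : x = y + (x - y) := by ring
    have h2 := (Dy.of_lab hlt).add h
    rwa [← hx] at h2
  have := lab_le this
  omega

/-- A labelled binary forest structure on a type. -/
structure Forest {A : Type*} (ι : A → ℕ) (E : ℕ → A → A → Prop) : Prop where
  surj : Function.Surjective ι
  zero : ∀ x y, E 0 x y ↔ ι x = ι y
  equiv : ∀ n, Equivalence (E n)
  step : ∀ n x y, E (n + 1) x y → E n x y
  sep : ∀ x y, (∀ n, E n x y) → x = y
  split : ∀ n x, ∃ y, E n x y ∧ ¬ E (n + 1) x y
  binary : ∀ n x y z, E n x y → E n x z → ¬ E (n + 1) x y → ¬ E (n + 1) x z → E (n + 1) y z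

def EQ (m : ℕ) (x y : ℚ) : Prop := lab x = lab y ∧ Dy (m - ((lab x - 1 : ℕ) : ℤ)) (x - y)

theorem forestQ : Forest lab EQ where
  surj i := by
    refine ⟨2 ^ (-(i : ℤ)), ?_⟩
    apply le_antisymm (lab_le (Dy.pow _))
    by_contra! hlt
    exact Dy.not_pow _ (Dy.mono (by omega) (lab_spec (2 ^ (-(i : ℤ)))))
  zero x y := by
    refine ⟨fun h => h.1, fun h => ⟨h, ?_⟩⟩
    simpa using lab_sub h
  equiv n := by
    refine ⟨fun x => ⟨rfl, by simpa using Dy.zero _⟩, ?_, ?_⟩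
    · rintro x y ⟨h, h'⟩
      refine ⟨h.symm, ?_⟩
      rw [← h, ← neg_sub x y]; exact h'.neg
    · rintro x y z ⟨h, h'⟩ ⟨g, g'⟩
      refine ⟨h.trans g, ?_⟩
      rw [← h] at g'
      rw [← sub_add_sub_cancel x y z]; exact h'.add g'
  step n x y h := ⟨h.1, h.2.mono (by push_cast; omega)⟩
  sep x y h := by
    apply sub_eq_zero.1
    apply Dy.eq_zero
    intro m
    exact (h (m + (lab x - 1))).2.mono (by push_cast; omega)
  split n x := by
    have e : x - (x - (2 : ℚ) ^ ((n : ℤ) - ((lab x - 1 : ℕ) : ℤ))) =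
      2 ^ ((n : ℤ) - ((lab x - 1 : ℕ) : ℤ)) := by ring
    refine ⟨x - 2 ^ ((n : ℤ) - ((lab x - 1 : ℕ) : ℤ)), ⟨lab_eq ?_, ?_⟩, ?_⟩
    · rw [e]; exact (Dy.pow _).mono (by omega)
    · rw [e]; exact Dy.pow _
    · rintro ⟨-, h⟩
      rw [e] at h
      exact Dy.not_pow _ (h.mono (by push_cast; omega))
  binary n x y z h g h' g' := by
    have e : ((n + 1 : ℕ) : ℤ) - ((lab x - 1 : ℕ) : ℤ) =
      (n : ℤ) - ((lab x - 1 : ℕ) : ℤ) + 1 := by push_cast; ring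
    refine ⟨h.1.symm.trans g.1, ?_⟩
    rw [← h.1, e]
    have : y - z = (x - z) - (x - y) := by ring
    rw [this]
    refine Dy.binary g.2 ?_ h.2 ?_
    · intro hh; exact g' ⟨g.1, by rw [e]; exact hh⟩
    · intro hh; exact h' ⟨h.1, by rw [e]; exact hh⟩

section chaos
variable {X : Type*} [LinearOrder X]

theorem chaos_of_forest {ι : X → ℕ} {E : ℕ → X → X → Prop} (hι : Monotone ι)
    (hc : ∀ n x y z, x < y → y < z → E n x z → E n x y)
    (f : ℚ → X) (hfι : ∀ q, ι (f q) = lab q)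
    (hfE : ∀ n p q, EQ n p q ↔ E n (f p) (f q)) :
    ¬ ∃ a b c : ℚ, f a < f b ∧ f b < f c ∧ b - a = c - b := by
  rintro ⟨a, b, c, hab, hbc, habc⟩
  have hc' : c = 2 * b - a := by linear_combination -habc
  have l1 : lab a ≤ lab b := by rw [← hfι, ← hfι]; exact hι hab.le
  have l2 : lab b ≤ lab c := by rw [← hfι, ← hfι]; exact hι hbc.le
  have two : ∀ j : ℕ, lab b ≤ j + 1 → Dy (-(j : ℤ)) (2 * b) := fun j hj =>
    (Dy.of_lab hj).two.mono (by push_cast; omega)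
  have e1 : lab a = lab b := by
    by_contra hne
    have : lab c ≤ lab b - 1 := by
      apply lab_le
      rw [hc']
      exact (two _ (by omega)).sub (Dy.of_lab (by omega))
    omega
  have e2 : lab c = lab b := by
    refine le_antisymm (lab_le ?_) l2
    rw [hc']
    exact (two _ (by omega)).sub (Dy.of_lab (by omega))
  have hnot : ∀ n, EQ n a b := by
    intro n
    induction n with
    | zero => exact (forestQ.zero _ _).2 e1
    | succ n ih =>
      rw [hfE]
      refine hc _ _ _ _ hab hbc ((hfE _ _ _).1 ⟨e1.trans e2.symm, ?_⟩)
      have : a - c = 2 * (a - b) := by rw [hc']; ring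
      rw [this]
      exact ih.2.two.mono (by push_cast; omega)
  rw [forestQ.sep _ _ hnot] at hab
  exact lt_irrefl _ hab
end chaos

section backforth
variable {A B : Type*} {ι : A → ℕ} {E : ℕ → A → A → Prop} {κ : B → ℕ} {F : ℕ → B → B → Prop}

theorem Forest.mono (hE : Forest ι E) {m n : ℕ} (h : m ≤ n) {x y : A} (hxy : E n x y) :
    E m x y := by
  induction n, h using Nat.le_induction with
  | base => exact hxy
  | succ n _ ih => exact ih (hE.step _ _ _ hxy)

/-- finite partial isomorphisms -/
def IsPart (ι : A → ℕ) (E : ℕ → A → A → Prop) (κ : B → ℕ) (F : ℕ → B → B → Prop)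
    (S : Finset (A × B)) : Prop :=
  (∀ p ∈ S, ι p.1 = κ p.2) ∧ ∀ p ∈ S, ∀ q ∈ S, ∀ n, E n p.1 q.1 ↔ F n p.2 q.2

theorem Forest.level (hE : Forest ι E) (hF : Forest κ F) {S : Finset (A × B)}
    (hS : IsPart ι E κ F S) (a : A) (n : ℕ) :
    ∃ b, ι a = κ b ∧ ∀ p ∈ S, ∀ m ≤ n, E m a p.1 ↔ F m b p.2 := by
  have eE : ∀ {n x y}, E n x y → ∀ z, (E n x z ↔ E n y z) := fun h z =>
    ⟨fun g => (hE.equiv _).trans ((hE.equiv _).symm h) g, fun g => (hE.equiv _).trans h g⟩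
  have eF : ∀ {n x y}, F n x y → ∀ z, (F n x z ↔ F n y z) := fun h z =>
    ⟨fun g => (hF.equiv _).trans ((hF.equiv _).symm h) g, fun g => (hF.equiv _).trans h g⟩
  induction n with
  | zero =>
    obtain ⟨b, hb⟩ := hF.surj (ι a)
    refine ⟨b, hb.symm, fun p hp m hm => ?_⟩
    obtain rfl : m = 0 := by omega
    rw [hE.zero, hF.zero, hb, hS.1 p hp]
  | succ n ih =>
    obtain ⟨b, hab, hb⟩ := ih
    by_cases h1 : ∃ p ∈ S, E (n + 1) a p.1
    · obtain ⟨p, hp, hap⟩ := h1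
      refine ⟨p.2, ?_, fun q hq m hm => ?_⟩
      · rw [← hS.1 p hp]; exact (hE.zero _ _).1 (hE.mono (Nat.zero_le _) hap)
      · rw [← hS.2 p hp q hq]
        exact eE (hE.mono hm hap) _
    push Not at h1
    by_cases h2 : ∃ p ∈ S, E n a p.1
    · obtain ⟨p, hp, hap⟩ := h2
      obtain ⟨c, hc, hc'⟩ := hF.split n p.2
      refine ⟨c, ?_, fun q hq m hm => ?_⟩
      · rw [← (hF.zero _ _).1 (hF.mono (Nat.zero_le _) hc), ← hS.1 p hp]
        exact (hE.zero _ _).1 (hE.mono (Nat.zero_le _) hap)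
      · have low : ∀ m ≤ n, (E m a q.1 ↔ F m c q.2) := by
          intro m hm
          rw [eE (hE.mono hm hap), hS.2 p hp q hq, eF (hF.mono hm hc)]
        rcases Nat.lt_or_ge n m with hlt | hle
        · obtain rfl : m = n + 1 := by omega
          refine ⟨fun h => absurd h (h1 q hq), fun h => ?_⟩
          exfalso
          have h3 : E n a q.1 := (low n le_rfl).2 (hF.step _ _ _ h)
          have h4 := hE.binary n a p.1 q.1 hap h3 (h1 p hp) (h1 q hq)
          rw [hS.2 p hp q hq] at h4
          exact hc' ((hF.equiv _).trans h4 ((hF.equiv _).symm h))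
        · exact low m hle
    · push Not at h2
      refine ⟨b, hab, fun q hq m hm => ?_⟩
      rcases Nat.lt_or_ge n m with hlt | hle
      · obtain rfl : m = n + 1 := by omega
        refine ⟨fun h => absurd h (h1 q hq), fun h => ?_⟩
        exact absurd ((hb q hq n le_rfl).2 (hF.step _ _ _ h)) (h2 q hq)
      · exact hb q hq m hle

theorem Forest.across (hE : Forest ι E) (hF : Forest κ F) {S : Finset (A × B)}
    (hS : IsPart ι E κ F S) (a : A) :
    ∃ b, ι a = κ b ∧ ∀ p ∈ S, ∀ m, E m a p.1 ↔ F m b p.2 := by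
  by_cases h : ∃ p ∈ S, p.1 = a
  · obtain ⟨p, hp, rfl⟩ := h
    exact ⟨p.2, hS.1 p hp, fun q hq => hS.2 p hp q hq⟩
  push Not at h
  have h1 : ∀ p : A × B, ∃ n, p ∈ S → ¬ E n a p.1 := by
    intro p
    by_contra! hcon
    exact h p (hcon 0).1 (hE.sep _ _ (fun n => (hcon n).2)).symm
  choose N hN using h1
  obtain ⟨b, hab, hb⟩ := hE.level hF hS a (S.sup N)
  refine ⟨b, hab, fun p hp m => ?_⟩
  have hle : N p ≤ S.sup N := Finset.le_sup hp
  rcases Nat.le_total m (S.sup N) with hm | hm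
  · exact hb p hp m hm
  · refine ⟨fun hh => absurd (hE.mono (hle.trans hm) hh) (hN p hp), fun hh => ?_⟩
    exact absurd (hE.mono hle ((hb p hp _ le_rfl).2 (hF.mono hm hh))) (hN p hp)

theorem IsPart.insert [DecidableEq (A × B)] (hE : Forest ι E) (hF : Forest κ F)
    {S : Finset (A × B)} (hS : IsPart ι E κ F S) {a : A} {b : B} (hab : ι a = κ b)
    (h : ∀ p ∈ S, ∀ m, E m a p.1 ↔ F m b p.2) : IsPart ι E κ F (insert (a, b) S) := by
  refine ⟨fun p hp => ?_, fun p hp q hq n => ?_⟩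
  · rw [Finset.mem_insert] at hp
    rcases hp with rfl | hp
    · exact hab
    · exact hS.1 p hp
  · rw [Finset.mem_insert] at hp hq
    have sE : ∀ x y, E n x y ↔ E n y x := fun x y => ⟨(hE.equiv n).symm, (hE.equiv n).symm⟩
    have sF : ∀ x y, F n x y ↔ F n y x := fun x y => ⟨(hF.equiv n).symm, (hF.equiv n).symm⟩
    rcases hp with rfl | hp <;> rcases hq with rfl | hq
    · exact ⟨fun _ => (hF.equiv n).refl _, fun _ => (hE.equiv n).refl _⟩
    · exact h q hq n
    · rw [sE, sF]; exact h p hp n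
    · exact hS.2 p hp q hq n

theorem IsPart.swap [DecidableEq (B × A)] {S : Finset (A × B)} (hS : IsPart ι E κ F S) :
    IsPart κ F ι E (S.image Prod.swap) := by
  refine ⟨fun p hp => ?_, fun p hp q hq n => ?_⟩
  · obtain ⟨p, hpS, rfl⟩ := Finset.mem_image.1 hp
    exact (hS.1 p hpS).symm
  · obtain ⟨p, hpS, rfl⟩ := Finset.mem_image.1 hp
    obtain ⟨q, hqS, rfl⟩ := Finset.mem_image.1 hq
    exact (hS.2 p hpS q hqS n).symm

theorem Forest.iso [Countable A] [Countable B] (hE : Forest ι E) (hF : Forest κ F) :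
    ∃ f : A → B, Function.Bijective f ∧ (∀ a, κ (f a) = ι a) ∧
      ∀ n x y, E n x y ↔ F n (f x) (f y) := by
  classical
  cases nonempty_encodable A
  cases nonempty_encodable B
  let P := {S : Finset (A × B) // IsPart ι E κ F S}
  let L : A → Order.Cofinal P := fun a =>
    { carrier := {S | ∃ b, (a, b) ∈ S.1}
      isCofinal := by
        intro S
        obtain ⟨b, hab, hb⟩ := hE.across hF S.2 a
        exact ⟨⟨insert (a, b) S.1, S.2.insert hE hF hab hb⟩, ⟨b, Finset.mem_insert_self _ _⟩,
          Finset.subset_insert _ _⟩ }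
  let R : B → Order.Cofinal P := fun b =>
    { carrier := {S | ∃ a, (a, b) ∈ S.1}
      isCofinal := by
        intro S
        obtain ⟨a, hab, ha⟩ := hF.across hE S.2.swap b
        refine ⟨⟨insert (a, b) S.1, S.2.insert hE hF hab.symm ?_⟩,
          ⟨a, Finset.mem_insert_self _ _⟩, Finset.subset_insert _ _⟩
        intro p hp m
        exact (ha p.swap (Finset.mem_image_of_mem _ hp) m).symm }
  let D : A ⊕ B → Order.Cofinal P := Sum.elim L R
  let I : Order.Ideal P := Order.idealOfCofinals ⟨∅, by simp [IsPart]⟩ D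
  have hL : ∀ a, ∃ b, ∃ S ∈ I, (a, b) ∈ S.1 := by
    intro a
    obtain ⟨S, ⟨b, hb⟩, hS⟩ := Order.cofinal_meets_idealOfCofinals ⟨∅, by simp [IsPart]⟩ D (Sum.inl a)
    exact ⟨b, S, hS, hb⟩
  have hR : ∀ b, ∃ a, ∃ S ∈ I, (a, b) ∈ S.1 := by
    intro b
    obtain ⟨S, ⟨a, ha⟩, hS⟩ := Order.cofinal_meets_idealOfCofinals ⟨∅, by simp [IsPart]⟩ D (Sum.inr b)
    exact ⟨a, S, hS, ha⟩
  have key : ∀ a b a' b', (∃ S ∈ I, (a, b) ∈ S.1) → (∃ S ∈ I, (a', b') ∈ S.1) →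
      ι a = κ b ∧ ∀ n, E n a a' ↔ F n b b' := by
    rintro a b a' b' ⟨S, hS, h⟩ ⟨T, hT, h'⟩
    obtain ⟨M, -, hM, hM'⟩ := I.directed _ hS _ hT
    exact ⟨S.2.1 _ h, M.2.2 _ (hM h) _ (hM' h')⟩
  choose f hf using hL
  refine ⟨f, ⟨fun x y hxy => ?_, fun b => ?_⟩, fun a => (key _ _ _ _ (hf a) (hf a)).1.symm,
    fun n x y => (key _ _ _ _ (hf x) (hf y)).2 n⟩
  · apply hE.sep
    intro n
    rw [(key _ _ _ _ (hf x) (hf y)).2 n, hxy]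
    exact (hF.equiv n).refl _
  · obtain ⟨a, ha⟩ := hR b
    refine ⟨a, hF.sep _ _ fun n => ?_⟩
    rw [← (key _ _ _ _ (hf a) ha).2 n]
    exact (hE.equiv n).refl _
end backforth

section orderside
variable {X : Type*} [LinearOrder X]

/-- The good cut attached to a point. -/
def cutU (p : X) : Set X := {x | p < x ∨ (x = p ∧ ¬ ∃ q, p ⋖ q)}

theorem cutU_upper (p : X) {x y : X} (hxy : x ≤ y) (hx : x ∈ cutU p) : y ∈ cutU p := by
  rcases hx with hx | ⟨rfl, hx⟩
  · exact Or.inl (hx.trans_le hxy)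
  · rcases hxy.lt_or_eq with h | rfl
    · exact Or.inl h
    · exact Or.inr ⟨rfl, hx⟩

theorem cutU_of_lt {p x : X} (h : p < x) : x ∈ cutU p := Or.inl h

theorem not_cutU_of_lt {p x : X} (h : x < p) : x ∉ cutU p := by
  rintro (h' | ⟨rfl, -⟩)
  · exact lt_asymm h h'
  · exact lt_irrefl _ h

theorem cutU_anti {p p' x : X} (h : p ≤ p') (hx : x ∈ cutU p') : x ∈ cutU p := by
  rcases h.lt_or_eq with h | rfl
  · rcases hx with hx | ⟨rfl, -⟩
    · exact Or.inl (h.trans hx)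
    · exact Or.inl h
  · exact hx

theorem cutU_sep {x y : X} (h : x < y) : ∃ p, x ∉ cutU p ∧ y ∈ cutU p := by
  by_cases hh : ∃ p, x < p ∧ p < y
  · obtain ⟨p, h1, h2⟩ := hh
    exact ⟨p, not_cutU_of_lt h1, Or.inl h2⟩
  · push Not at hh
    refine ⟨x, ?_, Or.inl h⟩
    rintro (h' | ⟨-, h'⟩)
    · exact lt_irrefl _ h'
    · exact h' ⟨y, h, fun c hc hcy => absurd (hh c hc) (not_le.2 hcy)⟩

theorem cutU_good (hmax : ∀ x : X, ∃ y, x < y)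
    (hI : ∀ x : X, ¬ ((IsMin x ∨ ∃ y, y ⋖ x) ∧ (IsMax x ∨ ∃ y, x ⋖ y)))
    (x : X) (F : Finset X) : ∃ y, y ≠ x ∧ ∀ p ∈ F, (y ∈ cutU p ↔ x ∈ cutU p) := by
  by_cases hx : ∃ q, x ⋖ q
  · have hx' : ¬ (IsMin x ∨ ∃ y, y ⋖ x) := fun h => hI x ⟨h, Or.inr hx⟩
    push Not at hx'
    obtain ⟨hmin, hcov⟩ := hx'
    obtain ⟨z, hz⟩ := not_isMin_iff.1 hmin
    -- the largest element of `F` below `x`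
    have hex : ∃ w, w < x ∧ ∀ p ∈ F, p < x → p ≤ w := by
      refine ⟨(insert z (F.filter (· < x))).max' (Finset.insert_nonempty _ _), ?_,
        fun p hp hpx => Finset.le_max' (insert z (F.filter (· < x))) p (by simp [hp, hpx])⟩
      rw [Finset.max'_lt_iff]
      intro y hy
      simp only [Finset.mem_insert, Finset.mem_filter] at hy
      rcases hy with rfl | hy
      · exact hz
      · exact hy.2
    obtain ⟨w, hw, hwF⟩ := hex
    obtain ⟨y, hy, hyx⟩ := (not_covBy_iff hw).1 (hcov w)
    refine ⟨y, hyx.ne, fun p hp => ⟨cutU_upper p hyx.le, ?_⟩⟩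
    rintro (h | ⟨rfl, h⟩)
    · exact Or.inl ((hwF p hp h).trans_lt hy)
    · exact absurd hx h
  · have hcov := hx
    push Not at hcov
    obtain ⟨z, hz⟩ := hmax x
    have hex : ∃ w, x < w ∧ ∀ p ∈ F, x < p → w ≤ p := by
      refine ⟨(insert z (F.filter (x < ·))).min' (Finset.insert_nonempty _ _), ?_,
        fun p hp hpx => Finset.min'_le (insert z (F.filter (x < ·))) p (by simp [hp, hpx])⟩
      rw [Finset.lt_min'_iff]
      intro y hy
      simp only [Finset.mem_insert, Finset.mem_filter] at hy
      rcases hy with rfl | hy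
      · exact hz
      · exact hy.2
    obtain ⟨w, hw, hwF⟩ := hex
    obtain ⟨y, hxy, hy⟩ := (not_covBy_iff hw).1 (hcov w)
    refine ⟨y, hxy.ne', fun p hp => ⟨fun h => ?_, cutU_upper p hxy.le⟩⟩
    by_contra hxp
    rcases lt_trichotomy x p with hlt | rfl | hlt
    · exact not_cutU_of_lt (hy.trans_le (hwF p hp hlt)) h
    · exact hxp (Or.inr ⟨rfl, hx⟩)
    · exact hxp (Or.inl hlt)

/-- first index of a cut splitting `C` -/
noncomputable def splitIdx (V : ℕ → Set X) (C : Set X) : ℕ :=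
  sInf {m | ∃ y ∈ C, ∃ z ∈ C, y ∈ V m ∧ z ∉ V m}

/-- the class of `x` at level `n` -/
noncomputable def cls (ι : X → ℕ) (V : ℕ → Set X) : ℕ → X → Set X
  | 0, x => {y | ι x = ι y}
  | n + 1, x => {y | y ∈ cls ι V n x ∧ (y ∈ V (splitIdx V (cls ι V n x)) ↔
      x ∈ V (splitIdx V (cls ι V n x)))}

variable {ι : X → ℕ} {V : ℕ → Set X}

theorem cls_self (n : ℕ) (x : X) : x ∈ cls ι V n x := by
  induction n with
  | zero => exact (rfl : ι x = ι x)
  | succ n ih => exact ⟨ih, Iff.rfl⟩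

theorem cls_eq {n : ℕ} {x y : X} (h : y ∈ cls ι V n x) : cls ι V n y = cls ι V n x := by
  induction n with
  | zero =>
    have h : ι x = ι y := h
    simp only [cls, h]
  | succ n ih =>
    obtain ⟨h1, h2⟩ := h
    ext z
    simp only [cls, Set.mem_ofPred_eq, ih h1, h2]

theorem cls_conv (hι : Monotone ι) (hV : ∀ n x y, x ≤ y → x ∈ V n → y ∈ V n)
    (n : ℕ) (x y z : X) (hxy : x < y) (hyz : y < z) (h : z ∈ cls ι V n x) : y ∈ cls ι V n x := by
  induction n with
  | zero =>
    have h : ι x = ι z := h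
    have h1 := hι hxy.le
    have h2 := hι hyz.le
    change ι x = ι y
    omega
  | succ n ih =>
    obtain ⟨h1, h2⟩ := h
    refine ⟨ih h1, fun h => h2.1 (hV _ _ _ hyz.le h), fun h => hV _ _ _ hxy.le h⟩

theorem forestX (hs : Function.Surjective ι)
    (hsep : ∀ x y : X, x < y → ∃ n, x ∉ V n ∧ y ∈ V n)
    (hgood : ∀ (x : X) (s : Finset ℕ), ∃ y, y ≠ x ∧ ι x = ι y ∧ ∀ n ∈ s, (y ∈ V n ↔ x ∈ V n)) :
    Forest ι (fun n x y => y ∈ cls ι V n x) := by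
  have sup : ∀ n x, ∃ s : Finset ℕ, ∀ y, ι x = ι y → (∀ n ∈ s, (y ∈ V n ↔ x ∈ V n)) →
      y ∈ cls ι V n x := by
    intro n x
    induction n with
    | zero => exact ⟨∅, fun y hy _ => hy⟩
    | succ n ih =>
      obtain ⟨s, hs⟩ := ih
      refine ⟨insert (splitIdx V (cls ι V n x)) s, fun y hy h => ⟨hs y hy fun n hn => ?_, ?_⟩⟩
      · exact h n (Finset.mem_insert_of_mem hn)
      · exact h _ (Finset.mem_insert_self _ _)
  have hsep' : ∀ x y : X, x ≠ y → ∃ n, ∃ a, ∃ b, (a = x ∧ b = y ∨ a = y ∧ b = x) ∧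
      a ∈ V n ∧ b ∉ V n := by
    intro x y h
    rcases lt_or_gt_of_ne h with h | h
    · obtain ⟨n, h1, h2⟩ := hsep _ _ h
      exact ⟨n, y, x, Or.inr ⟨rfl, rfl⟩, h2, h1⟩
    · obtain ⟨n, h1, h2⟩ := hsep _ _ h
      exact ⟨n, x, y, Or.inl ⟨rfl, rfl⟩, h2, h1⟩
  have spl : ∀ n x y, x ≠ y → y ∈ cls ι V n x →
      ∃ m, ∃ y ∈ cls ι V n x, ∃ z ∈ cls ι V n x, y ∈ V m ∧ z ∉ V m := by
    intro n x y hxy hy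
    obtain ⟨m, a, b, h, ha, hb⟩ := hsep' x y hxy
    rcases h with ⟨rfl, rfl⟩ | ⟨rfl, rfl⟩
    · exact ⟨m, _, cls_self _ _, _, hy, ha, hb⟩
    · exact ⟨m, _, hy, _, cls_self _ _, ha, hb⟩
  have eqv : ∀ n, Equivalence (fun x y => y ∈ cls ι V n x) := by
    intro n
    refine ⟨fun x => cls_self n x, fun {x y} h => ?_, fun {x y z} h g => ?_⟩
    · rw [cls_eq h]; exact cls_self _ _
    · rw [cls_eq h] at g; exact g
  refine ⟨hs, fun x y => Iff.rfl, eqv, fun n x y h => h.1, ?_, ?_, ?_⟩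
  · intro x y h
    by_contra hxy
    obtain ⟨k, a, b, hk, ha, hb⟩ := hsep' x y hxy
    have up : ∀ n, splitIdx V (cls ι V n x) ≤ k := by
      intro n
      apply Nat.sInf_le
      rcases hk with ⟨rfl, rfl⟩ | ⟨rfl, rfl⟩
      · exact ⟨_, cls_self _ _, _, h n, ha, hb⟩
      · exact ⟨_, h n, _, cls_self _ _, ha, hb⟩
    have lo : ∀ n, n ≤ splitIdx V (cls ι V n x) := by
      intro n
      induction n with
      | zero => exact Nat.zero_le _
      | succ n ih =>
        obtain ⟨y', hy', z', hz', h1, h2⟩ :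
          splitIdx V (cls ι V (n + 1) x) ∈ _ := Nat.sInf_mem (spl (n + 1) x y hxy (h (n + 1)))
        have hle : splitIdx V (cls ι V n x) ≤ splitIdx V (cls ι V (n + 1) x) :=
          Nat.sInf_le ⟨y', hy'.1, z', hz'.1, h1, h2⟩
        rcases hle.lt_or_eq with hlt | heq
        · omega
        · rw [← heq] at h1 h2
          exact absurd (hz'.2.2 (hy'.2.1 h1)) h2
    have h1 := up (k + 1)
    have h2 := lo (k + 1)
    omega
  · intro n x
    obtain ⟨s, hs⟩ := sup n x
    obtain ⟨y, hyx, hιy, hy⟩ := hgood x s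
    obtain ⟨y', hy', z', hz', h1, h2⟩ :
      splitIdx V (cls ι V n x) ∈ _ := Nat.sInf_mem (spl n x y hyx.symm (hs y hιy hy))
    by_cases hx : x ∈ V (splitIdx V (cls ι V n x))
    · exact ⟨z', hz', fun h => h2 (h.2.2 hx)⟩
    · exact ⟨y', hy', fun h => hx (h.2.1 h1)⟩
  · intro n x y z hy hz hy' hz'
    refine ⟨?_, ?_⟩
    · rw [cls_eq hy]; exact hz
    · rw [cls_eq hy]
      have h1 : ¬ (y ∈ V (splitIdx V (cls ι V n x)) ↔ x ∈ V (splitIdx V (cls ι V n x))) :=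
        fun h => hy' ⟨hy, h⟩
      have h2 : ¬ (z ∈ V (splitIdx V (cls ι V n x)) ↔ x ∈ V (splitIdx V (cls ι V n x))) :=
        fun h => hz' ⟨hz, h⟩
      tauto

theorem exists_chaotic [Countable X] [Nonempty X] (hmax : ∀ x : X, ∃ y, x < y)
    (hI : ∀ x : X, ¬ ((IsMin x ∨ ∃ y, y ⋖ x) ∧ (IsMax x ∨ ∃ y, x ⋖ y))) :
    ∃ f : ℚ → X, Function.Bijective f ∧
        ¬ ∃ a b c : ℚ, f a < f b ∧ f b < f c ∧ b - a = c - b := by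
  classical
  obtain ⟨e, he⟩ := exists_surjective_nat X
  choose gt hgt using hmax
  let p : ℕ → X := fun n => Nat.rec (gt (e 0)) (fun i q => gt (gt (max q (e i)))) n
  have hp1 : ∀ i, p (i + 1) = gt (gt (max (p i) (e i))) := fun i => rfl
  have hpm : Monotone p := by
    apply monotone_nat_of_le_succ
    intro i
    rw [hp1]
    exact ((le_max_left _ _).trans_lt ((hgt _).trans (hgt _))).le
  have hex : ∀ x, ∃ i, x ∉ cutU (p i) := by
    intro x
    obtain ⟨i, rfl⟩ := he x
    refine ⟨i + 1, not_cutU_of_lt ?_⟩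
    rw [hp1]
    exact (le_max_right _ _).trans_lt ((hgt _).trans (hgt _))
  let ι : X → ℕ := fun x => Nat.find (hex x)
  have hι1 : ∀ x, x ∉ cutU (p (ι x)) := fun x => Nat.find_spec (hex x)
  have hι2 : ∀ x j, x ∉ cutU (p j) → ι x ≤ j := fun x j h => Nat.find_min' (hex x) h
  have hιm : Monotone ι := by
    intro x y hxy
    exact hι2 _ _ fun h => hι1 y (cutU_upper _ hxy h)
  have hιs : Function.Surjective ι := by
    intro i
    cases i with
    | zero =>
      exact ⟨e 0, Nat.le_zero.1 (hι2 _ _ (not_cutU_of_lt (hgt _)))⟩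
    | succ i =>
      refine ⟨gt (max (p i) (e i)), le_antisymm (hι2 _ _ (not_cutU_of_lt ?_)) ?_⟩
      · rw [hp1]; exact hgt _
      · by_contra! hlt
        refine hι1 (gt (max (p i) (e i))) (cutU_anti (hpm (Nat.le_of_lt_succ hlt)) ?_)
        exact cutU_of_lt ((le_max_left _ _).trans_lt (hgt _))
  let V : ℕ → Set X := fun n => cutU (e n)
  have hsep : ∀ x y : X, x < y → ∃ n, x ∉ V n ∧ y ∈ V n := by
    intro x y h
    obtain ⟨q, hq⟩ := cutU_sep h
    obtain ⟨n, rfl⟩ := he q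
    exact ⟨n, hq⟩
  have hgood : ∀ (x : X) (s : Finset ℕ),
      ∃ y, y ≠ x ∧ ι x = ι y ∧ ∀ n ∈ s, (y ∈ V n ↔ x ∈ V n) := by
    intro x s
    obtain ⟨y, hyx, hy⟩ := cutU_good (fun x => ⟨_, hgt x⟩) hI x
      (s.image e ∪ (Finset.range (ι x + 1)).image p)
    refine ⟨y, hyx, ?_, fun n hn => hy _ ?_⟩
    · have hy' : ∀ j ≤ ι x, (y ∈ cutU (p j) ↔ x ∈ cutU (p j)) := fun j hj =>
        hy _ (Finset.mem_union_right _ (Finset.mem_image_of_mem _ (by simpa using Nat.lt_succ_of_le hj)))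
      have h1 : ι y ≤ ι x := hι2 _ _ fun h => hι1 x ((hy' _ le_rfl).1 h)
      have h2 : ι x ≤ ι y := hι2 _ _ fun h => hι1 y ((hy' _ h1).2 h)
      omega
    · exact Finset.mem_union_left _ (Finset.mem_image_of_mem _ hn)
  have hF := forestX hιs hsep hgood
  obtain ⟨f, hf, hfι, hfE⟩ := forestQ.iso hF
  refine ⟨f, hf, chaos_of_forest hιm ?_ f hfι hfE⟩
  exact cls_conv hιm (fun n x y hxy h => cutU_upper _ hxy h)
end orderside

section necessity

theorem period_of_chaotic {Y : Type*} [LinearOrder Y] {f : ℚ → Y} (hf : Function.Bijective f)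
    (hc : ¬ ∃ a b c : ℚ, f a < f b ∧ f b < f c ∧ b - a = c - b) (b : ℚ)
    (h : IsMax (f b) ∨ ∃ y, f b ⋖ y) :
    ∃ e : ℚ, e ≠ 0 ∧ ∀ (n : ℤ) (x : ℚ), f b < f (x + n * e) ↔ f b < f x := by
  have H : ∀ b x, f b < f x → f b < f (2 * b - x) := by
    intro b x h
    by_contra h'
    rcases (not_lt.1 h').lt_or_eq with h' | h'
    · exact hc ⟨_, _, _, h', h, by ring⟩
    · have := hf.1 h'
      have : x = b := by linarith
      rw [this] at h
      exact lt_irrefl _ h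
  have H' : ∀ b x, f x < f b → f (2 * b - x) < f b := by
    intro b x h
    by_contra h'
    rcases (not_lt.1 h').lt_or_eq with h' | h'
    · exact hc ⟨_, _, _, h, h', by ring⟩
    · have := hf.1 h'
      have : x = b := by linarith
      rw [this] at h
      exact lt_irrefl _ h
  rcases h with h | ⟨y, hy⟩
  · refine ⟨1, one_ne_zero, fun n x => ?_⟩
    exact ⟨fun hh => absurd hh h.not_lt, fun hh => absurd hh h.not_lt⟩
  obtain ⟨g, rfl⟩ := hf.2 y
  have hgb : g - b ≠ 0 := by
    intro h0
    have : g = b := by linarith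
    rw [this] at hy
    exact lt_irrefl _ hy.lt
  have S : ∀ x, f b < f x → f b < f (2 * g - x) := by
    intro x hx
    by_contra hcon
    have h1 : f (2 * g - x) < f g := (not_lt.1 hcon).trans_lt hy.lt
    have h2 := H' _ _ h1
    rw [sub_sub_cancel] at h2
    exact hy.2 hx h2
  have step : ∀ x, f b < f x → f b < f (x + 2 * (g - b)) := by
    intro x hx
    have := S _ (H b x hx)
    convert this using 2
    ring
  have step' : ∀ x, f b < f x → f b < f (x - 2 * (g - b)) := by
    intro x hx
    have := H b _ (S x hx)
    convert this using 2
    ring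
  refine ⟨2 * (g - b), mul_ne_zero two_ne_zero hgb, fun n => ?_⟩
  induction n using Int.induction_on with
  | zero => intro x; simp
  | succ n ih =>
    intro x
    have e : x + ((n + 1 : ℤ) : ℚ) * (2 * (g - b)) = (x + 2 * (g - b)) + ((n : ℤ) : ℚ) * (2 * (g - b)) := by
      push_cast; ring
    rw [e, ih]
    exact ⟨fun h => by simpa using step' _ h, step x⟩
  | pred n ih =>
    intro x
    have e : x + ((-n - 1 : ℤ) : ℚ) * (2 * (g - b)) = (x - 2 * (g - b)) + ((-n : ℤ) : ℚ) * (2 * (g - b)) := by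
      push_cast; ring
    rw [e, ih]
    exact ⟨fun h => by simpa using step _ h, step' x⟩

theorem not_isolated_of_chaotic {Y : Type*} [LinearOrder Y] {f : ℚ → Y} (hf : Function.Bijective f)
    (hc : ¬ ∃ a b c : ℚ, f a < f b ∧ f b < f c ∧ b - a = c - b) (x : Y) :
    ¬ ((IsMin x ∨ ∃ y, y ⋖ x) ∧ (IsMax x ∨ ∃ y, x ⋖ y)) := by
  rintro ⟨h1, h2⟩
  obtain ⟨b, rfl⟩ := hf.2 x
  obtain ⟨e, he, hp⟩ := period_of_chaotic hf hc b h2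
  obtain ⟨e', he', hp'⟩ := period_of_chaotic (Y := Yᵒᵈ) (f := fun q => OrderDual.toDual (f q))
    (OrderDual.toDual.bijective.comp hf)
    (by
      rintro ⟨u, v, w, h3, h4, h5⟩
      exact hc ⟨w, v, u, h4, h3, by linarith⟩) b
    (by
      rcases h1 with h1 | ⟨y, hy⟩
      · exact Or.inl h1.toDual
      · exact Or.inr ⟨OrderDual.toDual y, hy.toDual⟩)
  have k1 := hp (e'.num * e.den) b
  have k2 := hp' (e.num * e'.den) b
  have q1 : ((e'.num * e.den : ℤ) : ℚ) * e = e'.num * e.num := by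
    push_cast
    rw [mul_assoc, Rat.den_mul_eq_num]
  have q2 : ((e.num * e'.den : ℤ) : ℚ) * e' = e'.num * e.num := by
    push_cast
    rw [mul_assoc, Rat.den_mul_eq_num, mul_comm]
  rw [q1] at k1
  rw [q2] at k2
  have k1' : ¬ f b < f (b + e'.num * e.num) := fun h => lt_irrefl _ (k1.1 h)
  have k2' : ¬ f (b + e'.num * e.num) < f b := fun h => lt_irrefl _ (k2.1 h)
  have := hf.1 (le_antisymm (not_lt.1 k1') (not_lt.1 k2'))
  have h0 : (e'.num : ℚ) * e.num = 0 := by linarith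
  have n1 : (e'.num : ℚ) ≠ 0 := by exact_mod_cast Rat.num_ne_zero.2 he'
  have n2 : (e.num : ℚ) ≠ 0 := by exact_mod_cast Rat.num_ne_zero.2 he
  exact mul_ne_zero n1 n2 h0

theorem isOpen_singleton_iff_order {X : Type*} [LinearOrder X] [TopologicalSpace X]
    [OrderTopology X] (x : X) :
    IsOpen ({x} : Set X) ↔ ((IsMin x ∨ ∃ y, y ⋖ x) ∧ (IsMax x ∨ ∃ y, x ⋖ y)) := by
  constructor
  · intro h
    have hn : ({x} : Set X) ∈ nhds x := h.mem_nhds rfl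
    constructor
    · by_cases hm : IsMin x
      · exact Or.inl hm
      · obtain ⟨z, hz⟩ := not_isMin_iff.1 hm
        obtain ⟨l, hl, hs⟩ := exists_Ioc_subset_of_mem_nhds hn ⟨z, hz⟩
        exact Or.inr ⟨l, hl, fun c h1 h2 => h2.ne (hs ⟨h1, h2.le⟩)⟩
    · by_cases hm : IsMax x
      · exact Or.inl hm
      · obtain ⟨z, hz⟩ := not_isMax_iff.1 hm
        obtain ⟨l, hl, hs⟩ := exists_Ico_subset_of_mem_nhds hn ⟨z, hz⟩
        exact Or.inr ⟨l, hl, fun c h1 h2 => h1.ne' (hs ⟨h1.le, h2⟩)⟩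
  · rintro ⟨h1, h2⟩
    have o1 : IsOpen (Set.Ici x) := by
      rcases h1 with h1 | ⟨y, hy⟩
      · have : Set.Ici x = Set.univ := by
          ext z; simpa using (le_total x z).elim id (fun h => h1 h)
        rw [this]; exact isOpen_univ
      · rw [← hy.Ioi_eq]; exact isOpen_Ioi
    have o2 : IsOpen (Set.Iic x) := by
      rcases h2 with h2 | ⟨y, hy⟩
      · have : Set.Iic x = Set.univ := by
          ext z; simpa using (le_total z x).elim id (fun h => h2 h)
        rw [this]; exact isOpen_univ
      · rw [← hy.Iio_eq]; exact isOpen_Iio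
    have : ({x} : Set X) = Set.Ici x ∩ Set.Iic x := by
      ext z; simp [le_antisymm_iff, and_comm]
    rw [this]; exact o1.inter o2
end necessity

/-- Let (X, ⪯) be a countably infinite totally ordered set. There exists a
chaotic bijection f : ℚ → X if and only if X has no isolated points and either X does not
have a maximum or X does not have a minimum. -/
theorem stmt_2 {X : Type*} [LinearOrder X] [TopologicalSpace X] [OrderTopology X]
    [Countable X] [Infinite X] :
    (∃ f : ℚ → X, Function.Bijective f ∧
        ¬ ∃ a b c : ℚ, f a < f b ∧ f b < f c ∧ b - a = c - b) ↔
      ((∀ x : X, ¬ IsOpen ({x} : Set X)) ∧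
        ((¬ ∃ m : X, ∀ x : X, x ≤ m) ∨ (¬ ∃ m : X, ∀ x : X, m ≤ x))) := by
  simp only [isOpen_singleton_iff_order]
  constructor
  · rintro ⟨f, hf, hc⟩
    refine ⟨not_isolated_of_chaotic hf hc, ?_⟩
    by_contra! hcon
    obtain ⟨⟨M, hM⟩, m, hm⟩ := hcon
    obtain ⟨a, rfl⟩ := hf.2 m
    obtain ⟨c, rfl⟩ := hf.2 M
    have hac : a ≠ c := by
      rintro rfl
      obtain ⟨u, v, huv⟩ := exists_pair_ne X
      exact huv ((le_antisymm (hM u) (hm u)).trans (le_antisymm (hM v) (hm v)).symm)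
    refine hc ⟨a, (a + c) / 2, c, lt_of_le_of_ne (hm _) ?_, lt_of_le_of_ne (hM _) ?_, by ring⟩
    · intro h
      have := hf.1 h
      exact hac (by linarith)
    · intro h
      have := hf.1 h
      exact hac (by linarith)
  · rintro ⟨hI, h | h⟩
    · push Not at h
      exact exists_chaotic h hI
    · push Not at h
      haveI : Countable Xᵒᵈ := ‹Countable X›
      obtain ⟨f, hf, hc⟩ := exists_chaotic (X := Xᵒᵈ) h (by
        rintro x ⟨h1, h2⟩
        refine hI (OrderDual.ofDual x) ⟨?_, ?_⟩
        · rcases h2 with h2 | ⟨y, hy⟩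
          · exact Or.inl h2.ofDual
          · exact Or.inr ⟨OrderDual.ofDual y, hy.ofDual⟩
        · rcases h1 with h1 | ⟨y, hy⟩
          · exact Or.inl h1.ofDual
          · exact Or.inr ⟨OrderDual.ofDual y, hy.ofDual⟩)
      refine ⟨fun q => OrderDual.ofDual (f q), OrderDual.ofDual.bijective.comp hf, ?_⟩
      rintro ⟨a, b, c, h1, h2, h3⟩
      exact hc ⟨c, b, a, h2, h1, by linarith⟩
end
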